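/- Let f : S → ℂ be a non-zero solution of the integral Van Vleck equation, and define g : S → ℂ by g(x) := (Σ_{i∈I} c_i f(x z_i)) / (Σ_{i∈I} c_i f(z_i)) (the denominator being non-zero). Then Σ_{i∈I} Σ_{j∈I} c_i c_j g(z_i z_j) ≠ 0 and Σ_{i∈I} c_i g(z_i) = 0. -/

import Mathlib

/-!
Write `τ` for `star`, `μ = ∑ cᵢ δ_{zᵢ}`, `T` for convolution with `μ`, `T'` for convolution with the
image of `μ` under `τ`, and `α = ∫ f dμ`. Putting `y = zⱼ`, `y zⱼ` and `x zⱼ` into the Van Vleck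
equation `T f (x τ(y)) - T f (x y) = 2 f(x) f(y)` and integrating in `zⱼ` yields two subtraction
formulas

* `α f(x τ(y)) = f(x) T f(y) - T f(x) f(y)`,
* `α f(x y) = f(x) T f(y) - T' f(x) f(y)`.

If `α` were `0`, the first would make `T f` proportional to `f`, hence odd under `τ`, which forces
`f = 0`. As `α ≠ 0`, the two formulas together show `f(x y) = f(y x)`. This makes `T f` invariant
under `τ` on products, from which `T (T f) = -α f` and `T' f = -T f`. Both claims follow by
integrating these two identities, since `∫ T' f dμ = 0` for odd `f`.
-/

section DiracCombination

variable {R S ι : Type*} [CommSemiring R]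

/-- The integral `∫ h dμ` of functions `h` against the measure `μ = ∑ i ∈ I, c i • δ_{z i}`, which
is encoded throughout by the triple `I`, `c`, `z`. -/
def diracIntegral (I : Finset ι) (c : ι → R) (z : ι → S) : (S → R) →ₗ[R] R where
  toFun h := ∑ i ∈ I, c i * h (z i)
  map_add' h k := by simp [mul_add, Finset.sum_add_distrib]
  map_smul' r h := by simp [Finset.mul_sum, mul_left_comm]

/-- The convolution operator `h ↦ (x ↦ ∫ h(x t) dμ(t))` for `μ = ∑ i ∈ I, c i • δ_{z i}`; replacing
`z` by `star ∘ z` gives the operator of the image of `μ` under `star`. -/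
def translateSum [Mul S] (I : Finset ι) (c : ι → R) (z : ι → S) : (S → R) →ₗ[R] S → R where
  toFun h x := diracIntegral I c z fun t ↦ h (x * t)
  map_add' h k := by
    ext x
    exact map_add (diracIntegral I c z) (fun t ↦ h (x * t)) fun t ↦ k (x * t)
  map_smul' r h := by
    ext x
    exact map_smul (diracIntegral I c z) r fun t ↦ h (x * t)

lemma diracIntegral_apply (I : Finset ι) (c : ι → R) (z : ι → S) (h : S → R) :
    diracIntegral I c z h = ∑ i ∈ I, c i * h (z i) := rfl

lemma translateSum_apply [Mul S] (I : Finset ι) (c : ι → R) (z : ι → S) (h : S → R) (x : S) :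
    translateSum I c z h x = ∑ i ∈ I, c i * h (x * z i) := rfl

lemma diracIntegral_translateSum [Mul S] (I : Finset ι) (c : ι → R) (z : ι → S) (h : S → R) :
    diracIntegral I c z (translateSum I c z h) = ∑ i ∈ I, ∑ j ∈ I, c i * c j * h (z i * z j) := by
  simp only [diracIntegral_apply, translateSum_apply, Finset.mul_sum, mul_assoc]

variable [Mul S] {I : Finset ι} {c : ι → R} {z : ι → S}

lemma translateSum_apply_mul (hz : ∀ i ∈ I, z i ∈ Set.center S) (h : S → R) (x y : S) :
    translateSum I c z h (x * y) = ∑ i ∈ I, c i * h (x * z i * y) := by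
  rw [translateSum_apply]
  exact Finset.sum_congr rfl fun i hi ↦ by rw [(hz i hi).right_comm]

lemma translateSum_comm {κ : Type*} {J : Finset κ} {d : κ → R} {w : κ → S}
    (hz : ∀ i ∈ I, z i ∈ Set.center S) (h : S → R) :
    translateSum I c z (translateSum J d w h) = translateSum J d w (translateSum I c z h) := by
  ext x
  rw [translateSum_apply, translateSum_apply J]
  simp only [translateSum_apply_mul hz, translateSum_apply, Finset.mul_sum]
  rw [Finset.sum_comm]
  simp only [mul_left_comm]

lemma translateSum_mul_comm (hz : ∀ i ∈ I, z i ∈ Set.center S) {h : S → R}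
    (hcomm : ∀ x y, h (x * y) = h (y * x)) (x y : S) :
    translateSum I c z h (x * y) = translateSum I c z h (y * x) := by
  rw [translateSum_apply_mul hz h y x, translateSum_apply]
  refine Finset.sum_congr rfl fun i hi ↦ ?_
  rw [(hz i hi).right_assoc, hcomm]

end DiracCombination

lemma eq_zero_of_eq_neg_self {R : Type*} [NonAssocRing R] [NoZeroDivisors R] [NeZero (2 : R)]
    {a : R} (ha : a = -a) : a = 0 :=
  (mul_eq_zero_iff_left two_ne_zero).1 (by rw [two_mul]; exact add_eq_zero_iff_eq_neg.2 ha)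

section OddFunction

variable {R S ι : Type*} [CommRing R] [Mul S] [StarMul S]
  {I : Finset ι} {c : ι → R} {z : ι → S} {h : S → R}

lemma star_comp_mem_center (hz : ∀ i ∈ I, z i ∈ Set.center S) :
    ∀ i ∈ I, (star ∘ z) i ∈ Set.center S :=
  fun i hi ↦ Set.star_mem_center (hz i hi)

lemma translateSum_star (hz : ∀ i ∈ I, z i ∈ Set.center S) (hodd : ∀ x, h (star x) = -h x)
    (x : S) : translateSum I c z h (star x) = -translateSum I c (star ∘ z) h x := by
  rw [translateSum_apply, translateSum_apply, ← Finset.sum_neg_distrib]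
  refine Finset.sum_congr rfl fun i hi ↦ ?_
  rw [← (hz i hi).comm, ← mul_neg, ← hodd, star_mul, Function.comp_apply, star_star]

lemma diracIntegral_translateSum_star_comp [NoZeroDivisors R] [NeZero (2 : R)]
    (hodd : ∀ x, h (star x) = -h x) :
    diracIntegral I c z (translateSum I c (star ∘ z) h) = 0 := by
  apply eq_zero_of_eq_neg_self
  simp only [diracIntegral_apply, translateSum_apply, Finset.mul_sum, Function.comp_apply,
    ← Finset.sum_neg_distrib]
  rw [Finset.sum_comm]
  refine Finset.sum_congr rfl fun i _ ↦ Finset.sum_congr rfl fun j _ ↦ ?_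
  have hswap : h (z j * star (z i)) = -h (z i * star (z j)) := by simp [← hodd]
  rw [hswap]
  ring

end OddFunction

/-- The integral Van Vleck equation `∫ f(x τ(y) t) dμ(t) - ∫ f(x y t) dμ(t) = 2 f(x) f(y)` for
`μ = ∑ i ∈ I, c i • δ_{z i}`, with the involution `τ` given by `star`. -/
def IsVanVleck {R S ι : Type*} [CommRing R] [Mul S] [Star S] (I : Finset ι) (c : ι → R)
    (z : ι → S) (f : S → R) : Prop :=
  ∀ x y, translateSum I c z f (x * star y) - translateSum I c z f (x * y) = 2 * f x * f y

namespace IsVanVleck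

variable {R S ι κ : Type*} [CommRing R] [Mul S] [StarMul S]
  {I : Finset ι} {c : ι → R} {z : ι → S} {J : Finset κ} {d : κ → R} {w : κ → S} {f : S → R}

lemma translateSum_star_comp_sub (hf : IsVanVleck I c z f) (x : S) :
    translateSum J d (star ∘ w) (translateSum I c z f) x -
      translateSum J d w (translateSum I c z f) x = 2 * f x * diracIntegral J d w f := by
  rw [translateSum_apply, translateSum_apply J, diracIntegral_apply, ← Finset.sum_sub_distrib,
    Finset.mul_sum]
  refine Finset.sum_congr rfl fun j _ ↦ ?_
  rw [Function.comp_apply]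
  linear_combination d j * hf x (w j)

lemma translateSum_mul_star_sub (hf : IsVanVleck I c z f) (hw : ∀ j ∈ J, w j ∈ Set.center S)
    (x y : S) :
    translateSum J d w (translateSum I c z f) (x * star y) -
      translateSum J d w (translateSum I c z f) (x * y) = 2 * translateSum J d w f x * f y := by
  rw [translateSum_apply_mul hw, translateSum_apply_mul hw, translateSum_apply J,
    ← Finset.sum_sub_distrib, Finset.mul_sum, Finset.sum_mul]
  refine Finset.sum_congr rfl fun j _ ↦ ?_
  linear_combination d j * hf (x * w j) y

lemma translateSum_star_comp_mul_star_sub (hf : IsVanVleck I c z f)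
    (hw : ∀ j ∈ J, w j ∈ Set.center S) (x y : S) :
    translateSum J d (star ∘ w) (translateSum I c z f) (x * star y) -
      translateSum J d w (translateSum I c z f) (x * y) = 2 * f x * translateSum J d w f y := by
  rw [translateSum_apply_mul (star_comp_mem_center hw), translateSum_apply,
    translateSum_apply J, ← Finset.sum_sub_distrib, Finset.mul_sum]
  refine Finset.sum_congr rfl fun j hj ↦ ?_
  have hVV := hf x (y * w j)
  rw [star_mul, ← (Set.star_mem_center (hw j hj)).mid_assoc, ← (hw j hj).right_assoc] at hVV
  rw [Function.comp_apply]
  linear_combination d j * hVV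

variable [NoZeroDivisors R] [NeZero (2 : R)]

lemma map_star (hf : IsVanVleck I c z f) (y : S) : f (star y) = -f y := by
  have hsum (x : S) : 2 * (f x * (f (star y) + f y)) = 0 := by
    have hy := hf x (star y)
    rw [star_star] at hy
    linear_combination -hf x y - hy
  have hsq : 2 * (f (star y) + f y) ^ 2 = 0 := by
    linear_combination hsum (star y) + hsum y
  exact eq_neg_of_add_eq_zero_left
    (pow_eq_zero_iff two_ne_zero |>.1 ((mul_eq_zero_iff_left two_ne_zero).1 hsq))

lemma translateSum_sub_translateSum_star (hf : IsVanVleck I c z f) (x y : S) :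
    translateSum I c z f (x * y) - translateSum I c z f (star (x * y)) =
      translateSum I c z f (x * star y) - translateSum I c z f (star y * x) := by
  have hyx := hf (star y) x
  rw [hf.map_star] at hyx
  rw [star_mul]
  linear_combination -hf x y - hyx

lemma eq_zero_of_translateSum_star_eq_neg (hf : IsVanVleck I c z f)
    (hodd : ∀ x, translateSum I c z f (star x) = -translateSum I c z f x) : f = 0 := by
  have hself {x : S} (hx : star x = x) : translateSum I c z f x = 0 :=
    eq_zero_of_eq_neg_self (by rw [← hodd, hx])
  ext a
  have hstar : translateSum I c z f (a * star a) = 0 := hself (by simp)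
  have hstar' : translateSum I c z f (star a * a) = 0 := hself (by simp)
  have hsq : translateSum I c z f (a * a) = 0 := by
    have h := hf.translateSum_sub_translateSum_star a a
    rw [hodd, hstar, hstar'] at h
    exact eq_zero_of_eq_neg_self (by linear_combination h)
  have ha := hf a a
  rw [hstar, hsq] at ha
  simpa [two_ne_zero] using ha

lemma diracIntegral_mul_map_mul_star (hf : IsVanVleck I c z f) (hz : ∀ i ∈ I, z i ∈ Set.center S)
    (x y : S) :
    diracIntegral I c z f * f (x * star y) =
      f x * translateSum I c z f y - translateSum I c z f x * f y := by
  apply mul_left_cancel₀ (two_ne_zero (α := R))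
  linear_combination hf.translateSum_star_comp_mul_star_sub (d := c) hz x y -
    hf.translateSum_mul_star_sub (d := c) hz x y -
    hf.translateSum_star_comp_sub (J := I) (d := c) (w := z) (x * star y)

lemma diracIntegral_mul_map_mul (hf : IsVanVleck I c z f) (hz : ∀ i ∈ I, z i ∈ Set.center S)
    (x y : S) :
    diracIntegral I c z f * f (x * y) =
      f x * translateSum I c z f y - translateSum I c (star ∘ z) f x * f y := by
  apply mul_left_cancel₀ (two_ne_zero (α := R))
  linear_combination hf.translateSum_star_comp_mul_star_sub (d := c) hz x y -
    hf.translateSum_mul_star_sub (d := c) (star_comp_mem_center hz) x y -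
    hf.translateSum_star_comp_sub (J := I) (d := c) (w := z) (x * y)

lemma diracIntegral_ne_zero (hf : IsVanVleck I c z f) (hz : ∀ i ∈ I, z i ∈ Set.center S)
    (hf0 : f ≠ 0) : diracIntegral I c z f ≠ 0 := by
  intro hα
  obtain ⟨a, ha⟩ := Function.ne_iff.1 hf0
  have hprop (x : S) : translateSum I c z f x * f a = f x * translateSum I c z f a := by
    linear_combination hf.diracIntegral_mul_map_mul_star hz x a - f (x * star a) * hα
  refine hf0 (hf.eq_zero_of_translateSum_star_eq_neg fun x ↦ mul_right_cancel₀ ha ?_)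
  rw [hprop, hf.map_star]
  linear_combination hprop x

lemma map_mul_comm (hf : IsVanVleck I c z f) (hz : ∀ i ∈ I, z i ∈ Set.center S)
    (hf0 : f ≠ 0) (x y : S) : f (x * y) = f (y * x) := by
  have hxy := hf.diracIntegral_mul_map_mul_star hz x (star y)
  rw [star_star, hf.map_star, translateSum_star hz hf.map_star] at hxy
  apply mul_left_cancel₀ (hf.diracIntegral_ne_zero hz hf0)
  linear_combination hxy - hf.diracIntegral_mul_map_mul hz y x

lemma translateSum_star_mul (hf : IsVanVleck I c z f) (hz : ∀ i ∈ I, z i ∈ Set.center S)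
    (hf0 : f ≠ 0) (x y : S) :
    translateSum I c z f (star (x * y)) = translateSum I c z f (x * y) := by
  linear_combination translateSum_mul_comm (c := c) hz (hf.map_mul_comm hz hf0) (star y) x -
    hf.translateSum_sub_translateSum_star x y

lemma translateSum_star_comp_translateSum (hf : IsVanVleck I c z f)
    (hz : ∀ i ∈ I, z i ∈ Set.center S) (hf0 : f ≠ 0) :
    translateSum I c (star ∘ z) (translateSum I c z f) =
      -translateSum I c z (translateSum I c z f) := by
  rw [← translateSum_comm hz]
  ext x
  rw [Pi.neg_apply, translateSum_apply, translateSum_apply, ← Finset.sum_neg_distrib]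
  refine Finset.sum_congr rfl fun i _ ↦ ?_
  rw [← hf.translateSum_star_mul hz hf0, translateSum_star hz hf.map_star, mul_neg, neg_neg]

lemma translateSum_translateSum (hf : IsVanVleck I c z f) (hz : ∀ i ∈ I, z i ∈ Set.center S)
    (hf0 : f ≠ 0) :
    translateSum I c z (translateSum I c z f) = -(diracIntegral I c z f • f) := by
  ext x
  have hsub := hf.translateSum_star_comp_sub (J := I) (d := c) (w := z) x
  rw [hf.translateSum_star_comp_translateSum hz hf0, Pi.neg_apply] at hsub
  apply mul_left_cancel₀ (two_ne_zero (α := R))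
  rw [Pi.neg_apply, Pi.smul_apply, smul_eq_mul]
  linear_combination -hsub

lemma translateSum_star_comp_eq_neg (hf : IsVanVleck I c z f) (hz : ∀ i ∈ I, z i ∈ Set.center S)
    (hf0 : f ≠ 0) : translateSum I c (star ∘ z) f = -translateSum I c z f := by
  set T := translateSum I c z
  set T' := translateSum I c (star ∘ z)
  have hTT : T (T f) = -(diracIntegral I c z f • f) := hf.translateSum_translateSum hz hf0
  apply smul_right_injective _ (hf.diracIntegral_ne_zero hz hf0)
  calc diracIntegral I c z f • T' f
      = -T' (T (T f)) := by rw [hTT, map_neg, map_smul, neg_neg]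
    _ = -T (T' (T f)) := congrArg Neg.neg (translateSum_comm hz (T f)).symm
    _ = T (T (T f)) := by
      rw [hf.translateSum_star_comp_translateSum hz hf0, map_neg, neg_neg]
    _ = diracIntegral I c z f • -T f := by rw [hTT, map_neg, map_smul, smul_neg]

lemma diracIntegral_translateSum_eq_zero (hf : IsVanVleck I c z f)
    (hz : ∀ i ∈ I, z i ∈ Set.center S) (hf0 : f ≠ 0) :
    diracIntegral I c z (translateSum I c z f) = 0 := by
  rw [← neg_eq_zero, ← map_neg, ← hf.translateSum_star_comp_eq_neg hz hf0,
    diracIntegral_translateSum_star_comp hf.map_star]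

end IsVanVleck

theorem stmt_7_general {K S ι : Type*} [Field K] [NeZero (2 : K)] [Mul S] [StarMul S]
    {I : Finset ι} {c : ι → K} {z : ι → S} (hz : ∀ i ∈ I, z i ∈ Set.center S) {f g : S → K}
    (hf0 : f ≠ 0) (hf : IsVanVleck I c z f)
    (hg : ∀ x, g x = translateSum I c z f x / diracIntegral I c z f) :
    (∑ i ∈ I, ∑ j ∈ I, c i * c j * g (z i * z j)) ≠ 0 ∧ (∑ i ∈ I, c i * g (z i)) = 0 := by
  have hα : diracIntegral I c z f ≠ 0 := hf.diracIntegral_ne_zero hz hf0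
  have hg' : g = (diracIntegral I c z f)⁻¹ • translateSum I c z f := by
    ext x
    rw [hg, Pi.smul_apply, smul_eq_mul, div_eq_inv_mul]
  rw [← diracIntegral_translateSum, ← diracIntegral_apply, hg']
  constructor
  · rw [map_smul, hf.translateSum_translateSum hz hf0, smul_neg, inv_smul_smul₀ hα, map_neg]
    exact neg_ne_zero.2 hα
  · rw [map_smul, hf.diracIntegral_translateSum_eq_zero hz hf0, smul_zero]

theorem stmt_7 {S ι : Type*} [Semigroup S] (τ : S → S)
    (hτmul : ∀ x y : S, τ (x * y) = τ y * τ x)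
    (hτinv : ∀ x : S, τ (τ x) = x)
    (I : Finset ι) (c : ι → ℂ) (z : ι → S)
    (hz : ∀ i ∈ I, ∀ s : S, z i * s = s * z i)
    (f : S → ℂ) (hf : f ≠ 0)
(hVV : ∀ x y : S,
      (∑ i ∈ I, c i * f (x * τ y * z i)) - (∑ i ∈ I, c i * f (x * y * z i))
        = 2 * f x * f y)
    (g : S → ℂ)
    (hg : ∀ x : S, g x = (∑ i ∈ I, c i * f (x * z i)) / (∑ i ∈ I, c i * f (z i))) :
    (∑ i ∈ I, ∑ j ∈ I, c i * c j * g (z i * z j)) ≠ 0 ∧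
    (∑ i ∈ I, c i * g (z i)) = 0 := by
  let : StarMul S := { star := τ, star_involutive := hτinv, star_mul := hτmul }
  exact stmt_7_general (fun i hi ↦ Semigroup.mem_center_iff.2 fun s ↦ (hz i hi s).symm) hf hVV hg
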